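/- arXiv:2007.07727 — 2 statements merged into one kernel-verified Lean document; each statement's English description precedes it below -/
import Mathlib

section
/- For every a > 0 and t > 0, ∫_t^∞ y K₀(a y)/(y² − t²)^{1/2} dy = (π/(2a)) e^{−a t}. -/
open MeasureTheory Real

/-- The modified Bessel function of the second kind of order zero,
`K₀(x) = ∫₀^∞ e^{−x cosh u} du`. -/
noncomputable def besselK0 (x : ℝ) : ℝ :=
  ∫ u in Set.Ioi (0 : ℝ), Real.exp (-x * Real.cosh u)

/-!
The theorem is the case `F(q) = e^{-a q}` of the identity
`∫_t^∞ y / √(y² - t²) ∫_0^∞ F(y cosh u) du dy = (π / 2) ∫_t^∞ F(q) dq`, valid for integrable `F`.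
The substitutions `y = √(t² + r²)` and `w = y sinh u` turn its left-hand side into the integral over
the quadrant `r, w > 0` of the radial function `F(q) / q`, where `q = √(t² + r² + w²)`. In polar
coordinates this is `(π / 2) ∫_0^∞ ρ F(q) / q dρ` with `q = √(t² + ρ²)`, and `ρ dρ = q dq`.
-/

open Set Filter

variable {E : Type*} [NormedAddCommGroup E] [NormedSpace ℝ E]

lemma strictMonoOn_sqrt_sq_add_sq (t : ℝ) :
    StrictMonoOn (fun r : ℝ ↦ √(t ^ 2 + r ^ 2)) (Ici 0) := by
  intro r (hr : 0 ≤ r) s _ hrs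
  dsimp only
  gcongr

lemma image_sqrt_sq_add_sq_Ioi {t : ℝ} (ht : 0 ≤ t) :
    (fun r : ℝ ↦ √(t ^ 2 + r ^ 2)) '' Ioi 0 = Ioi t := by
  have hcont : ContinuousOn (fun r : ℝ ↦ √(t ^ 2 + r ^ 2)) (Ici 0) := by fun_prop
  have htop : Tendsto (fun r : ℝ ↦ √(t ^ 2 + r ^ 2)) atTop atTop :=
    tendsto_atTop_mono (fun r ↦ le_sqrt_of_sq_le (le_add_of_nonneg_left (sq_nonneg t))) tendsto_id
  simpa [sqrt_sq ht] using hcont.image_Ioi_of_strictMonoOn (strictMonoOn_sqrt_sq_add_sq t) htop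

lemma hasDerivAt_sqrt_sq_add_sq (t : ℝ) {r : ℝ} (hr : r ≠ 0) :
    HasDerivAt (fun r : ℝ ↦ √(t ^ 2 + r ^ 2)) (r / √(t ^ 2 + r ^ 2)) r := by
  have h : HasDerivAt (fun r : ℝ ↦ t ^ 2 + r ^ 2) (2 * r) r := by
    simpa using (hasDerivAt_pow 2 r).const_add (t ^ 2)
  simpa only [mul_div_mul_left _ _ (two_ne_zero' ℝ)] using h.sqrt (by positivity)

lemma integral_Ioi_comp_sqrt_sq_add_sq {t : ℝ} (ht : 0 ≤ t) (g : ℝ → E) :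
    ∫ r in Ioi 0, (r / √(t ^ 2 + r ^ 2)) • g (√(t ^ 2 + r ^ 2)) = ∫ q in Ioi t, g q := by
  rw [← image_sqrt_sq_add_sq_Ioi ht, integral_image_eq_integral_deriv_smul_of_monotoneOn
    measurableSet_Ioi
    (fun r hr ↦ (hasDerivAt_sqrt_sq_add_sq t (ne_of_gt hr)).hasDerivWithinAt)
    ((strictMonoOn_sqrt_sq_add_sq t).monotoneOn.mono Ioi_subset_Ici_self)]

lemma integrableOn_Ioi_comp_sqrt_sq_add_sq {t : ℝ} (ht : 0 ≤ t) {g : ℝ → E} :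
    IntegrableOn (fun r ↦ (r / √(t ^ 2 + r ^ 2)) • g (√(t ^ 2 + r ^ 2))) (Ioi 0) ↔
      IntegrableOn g (Ioi t) := by
  rw [← image_sqrt_sq_add_sq_Ioi ht, integrableOn_image_iff_integrableOn_deriv_smul_of_monotoneOn
    measurableSet_Ioi
    (fun r hr ↦ (hasDerivAt_sqrt_sq_add_sq t (ne_of_gt hr)).hasDerivWithinAt)
    ((strictMonoOn_sqrt_sq_add_sq t).monotoneOn.mono Ioi_subset_Ici_self)]

lemma integral_Ioi_comp_mul_sinh {y : ℝ} (hy : 0 < y) (g : ℝ → E) :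
    ∫ u in Ioi 0, (y * cosh u) • g (y * sinh u) = ∫ w in Ioi 0, g w := by
  have hderiv (u : ℝ) : HasDerivAt (fun u ↦ y * sinh u) (y * cosh u) u :=
    (hasDerivAt_sinh u).const_mul y
  have hmono : StrictMono (fun u ↦ y * sinh u) := sinh_strictMono.const_mul hy
  have himage : (fun u ↦ y * sinh u) '' Ioi 0 = Ioi 0 := by
    have hcont : ContinuousOn (fun u ↦ y * sinh u) (Ici 0) := by fun_prop
    have htop : Tendsto (fun u ↦ y * sinh u) atTop atTop :=
      sinhOrderIso.tendsto_atTop.const_mul_atTop hy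
    simpa using hcont.image_Ioi_of_strictMonoOn (hmono.strictMonoOn _) htop
  conv_rhs => rw [← himage, integral_image_eq_integral_deriv_smul_of_monotoneOn measurableSet_Ioi
    (fun u _ ↦ (hderiv u).hasDerivWithinAt) (hmono.monotone.monotoneOn _)]

lemma sqrt_sq_add_mul_sinh_sq {y : ℝ} (hy : 0 ≤ y) (u : ℝ) :
    √(y ^ 2 + (y * sinh u) ^ 2) = y * cosh u := by
  have hsq : y ^ 2 + (y * sinh u) ^ 2 = (y * cosh u) ^ 2 := by
    linear_combination -y ^ 2 * cosh_sq u
  rw [hsq, sqrt_sq (mul_nonneg hy (cosh_pos u).le)]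

lemma integral_Ioi_inv_sqrt_smul_comp_sqrt {y : ℝ} (hy : 0 < y) (F : ℝ → E) :
    ∫ w in Ioi 0, (√(y ^ 2 + w ^ 2))⁻¹ • F (√(y ^ 2 + w ^ 2)) =
      ∫ u in Ioi 0, F (y * cosh u) := by
  rw [← integral_Ioi_comp_mul_sinh hy]
  simp only [sqrt_sq_add_mul_sinh_sq hy.le, smul_inv_smul₀ (mul_pos hy (cosh_pos _)).ne']

lemma integral_eq_two_smul_integral_Ioi {f : ℝ → E} (hf : Function.Even f) :
    ∫ x, f x = (2 : ℝ) • ∫ x in Ioi 0, f x := by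
  have habs (x : ℝ) : f |x| = f x := by
    rcases abs_choice x with hx | hx <;> rw [hx]
    exact hf x
  simpa [habs, Measure.real, Real.volume_ball] using
    integral_fun_norm_addHaar (volume : Measure ℝ) f

lemma sq_norm_eq_re_sq_add_im_sq (z : ℂ) : ‖z‖ ^ 2 = z.re ^ 2 + z.im ^ 2 := by
  rw [Complex.sq_norm, Complex.normSq_apply, sq, sq]

lemma integrable_comp_sq_add_sq {g : ℝ → E} :
    Integrable (fun p : ℝ × ℝ ↦ g (p.1 ^ 2 + p.2 ^ 2)) ↔
      IntegrableOn (fun ρ ↦ ρ • g (ρ ^ 2)) (Ioi 0) := by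
  rw [← Complex.volume_preserving_equiv_real_prod.integrable_comp_emb
    Complex.measurableEquivRealProd.measurableEmbedding]
  simpa [Function.comp_def, ← sq_norm_eq_re_sq_add_im_sq] using
    integrable_fun_norm_addHaar (volume : Measure ℂ) (f := fun ρ ↦ g (ρ ^ 2))

lemma integral_comp_sq_add_sq (g : ℝ → E) :
    ∫ p : ℝ × ℝ, g (p.1 ^ 2 + p.2 ^ 2) = (2 * π) • ∫ ρ in Ioi 0, ρ • g (ρ ^ 2) := by
  rw [← Complex.volume_preserving_equiv_real_prod.integral_comp
    Complex.measurableEquivRealProd.measurableEmbedding]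
  simpa [← sq_norm_eq_re_sq_add_im_sq, Measure.real, mul_smul, two_smul] using
    integral_fun_norm_addHaar (volume : Measure ℂ) (fun ρ ↦ g (ρ ^ 2))

lemma integral_quadrant_comp_sq_add_sq {g : ℝ → E}
    (hg : IntegrableOn (fun ρ ↦ ρ • g (ρ ^ 2)) (Ioi 0)) :
    ∫ x in Ioi 0, ∫ y in Ioi 0, g (x ^ 2 + y ^ 2) = (π / 2) • ∫ ρ in Ioi 0, ρ • g (ρ ^ 2) := by
  have hinner (x : ℝ) : ∫ y, g (x ^ 2 + y ^ 2) = (2 : ℝ) • ∫ y in Ioi 0, g (x ^ 2 + y ^ 2) :=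
    integral_eq_two_smul_integral_Ioi fun y ↦ by rw [neg_sq]
  have houter : ∫ x, ∫ y in Ioi 0, g (x ^ 2 + y ^ 2) =
      (2 : ℝ) • ∫ x in Ioi 0, ∫ y in Ioi 0, g (x ^ 2 + y ^ 2) :=
    integral_eq_two_smul_integral_Ioi fun x ↦ by simp only [neg_sq]
  have hplane : (2 * π) • ∫ ρ in Ioi 0, ρ • g (ρ ^ 2) =
      (4 : ℝ) • ∫ x in Ioi 0, ∫ y in Ioi 0, g (x ^ 2 + y ^ 2) :=
    calc (2 * π) • ∫ ρ in Ioi 0, ρ • g (ρ ^ 2)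
      _ = ∫ p : ℝ × ℝ, g (p.1 ^ 2 + p.2 ^ 2) := (integral_comp_sq_add_sq g).symm
      _ = ∫ x, ∫ y, g (x ^ 2 + y ^ 2) := integral_prod _ (integrable_comp_sq_add_sq.2 hg)
      _ = (4 : ℝ) • ∫ x in Ioi 0, ∫ y in Ioi 0, g (x ^ 2 + y ^ 2) := by
        simp only [hinner, integral_smul, houter, smul_smul]
        norm_num
  rw [← inv_smul_eq_iff₀ four_ne_zero, smul_smul] at hplane
  rw [← hplane]
  congr 1
  ring

lemma integral_Ioi_integral_comp_mul_cosh {t : ℝ} (ht : 0 ≤ t) {F : ℝ → E}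
    (hF : IntegrableOn F (Ioi t)) :
    ∫ y in Ioi t, (y / √(y ^ 2 - t ^ 2)) • ∫ u in Ioi 0, F (y * cosh u) =
      (π / 2) • ∫ q in Ioi t, F q := by
  have hradial (ρ : ℝ) : ρ • (√(t ^ 2 + ρ ^ 2))⁻¹ • F (√(t ^ 2 + ρ ^ 2)) =
      (ρ / √(t ^ 2 + ρ ^ 2)) • F (√(t ^ 2 + ρ ^ 2)) := by
    rw [smul_smul, div_eq_mul_inv]
  calc ∫ y in Ioi t, (y / √(y ^ 2 - t ^ 2)) • ∫ u in Ioi 0, F (y * cosh u)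
    _ = ∫ r in Ioi 0, ∫ u in Ioi 0, F (√(t ^ 2 + r ^ 2) * cosh u) := by
      rw [← integral_Ioi_comp_sqrt_sq_add_sq ht]
      refine setIntegral_congr_fun measurableSet_Ioi fun r (hr : 0 < r) ↦ ?_
      have hq : √(t ^ 2 + r ^ 2) ≠ 0 := by positivity
      have hr_eq : √(√(t ^ 2 + r ^ 2) ^ 2 - t ^ 2) = r := by
        rw [sq_sqrt (by positivity), add_sub_cancel_left, sqrt_sq hr.le]
      simp only [hr_eq, smul_smul, div_mul_div_cancel₀ hq, div_self hr.ne', one_smul]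
    _ = ∫ r in Ioi 0, ∫ w in Ioi 0,
          (√(t ^ 2 + (r ^ 2 + w ^ 2)))⁻¹ • F (√(t ^ 2 + (r ^ 2 + w ^ 2))) := by
      refine setIntegral_congr_fun measurableSet_Ioi fun r (hr : 0 < r) ↦ ?_
      have hq : 0 < √(t ^ 2 + r ^ 2) := by positivity
      have hq_sq : √(t ^ 2 + r ^ 2) ^ 2 = t ^ 2 + r ^ 2 := sq_sqrt (by positivity)
      simp only [← integral_Ioi_inv_sqrt_smul_comp_sqrt hq, hq_sq, add_assoc]
    _ = (π / 2) • ∫ ρ in Ioi 0, ρ • (√(t ^ 2 + ρ ^ 2))⁻¹ • F (√(t ^ 2 + ρ ^ 2)) :=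
      integral_quadrant_comp_sq_add_sq (g := fun s ↦ (√(t ^ 2 + s))⁻¹ • F (√(t ^ 2 + s))) <| by
        simpa only [hradial] using (integrableOn_Ioi_comp_sqrt_sq_add_sq ht).2 hF
    _ = (π / 2) • ∫ q in Ioi t, F q := by
      simp only [hradial, integral_Ioi_comp_sqrt_sq_add_sq ht F]

lemma besselK0_mul (a y : ℝ) :
    besselK0 (a * y) = ∫ u in Ioi 0, exp (-a * (y * cosh u)) := by
  simp only [besselK0, neg_mul, mul_assoc]

/-- `∫_t^∞ y K₀(a y)/(y² − t²)^{1/2} dy = (π/(2a)) e^{−a t}` for `a, t > 0`. -/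
theorem integral_besselK0_sqrt (a t : ℝ) (ha : 0 < a) (ht : 0 < t) :
    ∫ y in Set.Ioi t, y * besselK0 (a * y) / Real.sqrt (y ^ 2 - t ^ 2) =
      π / (2 * a) * Real.exp (-(a * t)) := by
  have hneg : -a < 0 := neg_lt_zero.2 ha
  calc ∫ y in Ioi t, y * besselK0 (a * y) / √(y ^ 2 - t ^ 2)
    _ = ∫ y in Ioi t, (y / √(y ^ 2 - t ^ 2)) • ∫ u in Ioi 0, exp (-a * (y * cosh u)) := by
      simp only [besselK0_mul, smul_eq_mul, mul_div_right_comm]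
    _ = (π / 2) • ∫ q in Ioi t, exp (-a * q) :=
      integral_Ioi_integral_comp_mul_cosh ht.le (integrableOn_exp_mul_Ioi hneg t)
    _ = π / (2 * a) * exp (-(a * t)) := by
      rw [integral_exp_mul_Ioi hneg, neg_div_neg_eq, neg_mul, smul_eq_mul, div_mul_div_comm,
        mul_div_right_comm]
end

section
/- Let ψ : ℝ → ℂ be a 2π-periodic function satisfying the Lipschitz condition |ψ(u) − ψ(v)| ≤ C|u − v| for all u, v ∈ [−π, π], let φ(u) = ψ(u) sinh(u), and let f(x) = (2x/π) ∫_{−π}^{π} K₀(x cosh u) φ(u) cosh(u) du for x > 0. Then for every t > 0, ∫_t^∞ f(y)/(y² − t²)^{1/2} dy = ∫_{−π}^{π} e^{−t cosh u} φ(u) du. -/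
/-!
Substituting `w = y cosh v` in the integral defining `K₀` gives
`K₀(y c) = ∫_y^∞ e^{-w c} / √(w² - y²) dw`, so that `K₀` is itself an Abel transform. Composing with
a second one and exchanging the integrals over the triangle `t < y < w` leaves
`∫_t^∞ y K₀(y c) / √(y² - t²) dy = ∫_t^∞ e^{-w c} (∫_t^w y / (√(w² - y²) √(y² - t²)) dy) dw`,
whose inner integral is `π / 2`, independently of `t` and `w`. The right-hand side is thus
`π / (2 c) · e^{-t c}`, and a last application of Fubini, with `c = cosh u`, brings in `φ`.
-/

open MeasureTheory Real

open Set

lemma lintegral_Ioi_lintegral_Ioi_swap {α : Type*} [LinearOrder α] [TopologicalSpace α]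
    [OrderClosedTopology α] [SecondCountableTopology α] [MeasurableSpace α] [BorelSpace α]
    {μ : Measure α} [SFinite μ] {F : α → α → ENNReal} (hF : Measurable (Function.uncurry F))
    (a : α) :
    ∫⁻ x in Ioi a, ∫⁻ y in Ioi x, F x y ∂μ ∂μ = ∫⁻ y in Ioi a, ∫⁻ x in Ioo a y, F x y ∂μ ∂μ := by
  have hF' : Measurable (Function.uncurry fun x y ↦ (Ioi x).indicator (F x) y) :=
    hF.indicator (measurableSet_lt measurable_fst measurable_snd)
  calc ∫⁻ x in Ioi a, ∫⁻ y in Ioi x, F x y ∂μ ∂μ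
      = ∫⁻ x in Ioi a, ∫⁻ y in Ioi a, (Ioi x).indicator (F x) y ∂μ ∂μ := by
        refine setLIntegral_congr_fun measurableSet_Ioi fun x hx ↦ ?_
        rw [setLIntegral_indicator measurableSet_Ioi,
          inter_eq_left.2 (Ioi_subset_Ioi (mem_Ioi.1 hx).le)]
    _ = ∫⁻ y in Ioi a, ∫⁻ x in Ioi a, (Iio y).indicator (F · y) x ∂μ ∂μ :=
        lintegral_lintegral_swap hF'.aemeasurable
    _ = ∫⁻ y in Ioi a, ∫⁻ x in Ioo a y, F x y ∂μ ∂μ := by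
        simp only [setLIntegral_indicator measurableSet_Iio, inter_comm (Iio _), Ioi_inter_Iio]

-- The argument of `arcsin` is the affine function of `y²` that maps `[t², w²]` onto `[-1, 1]`.
lemma hasDerivAt_arcsin_sq_div_two {t y w : ℝ} (ht : 0 ≤ t) (hty : t < y) (hyw : y < w) :
    HasDerivAt (fun y ↦ arcsin ((2 * y ^ 2 - t ^ 2 - w ^ 2) / (w ^ 2 - t ^ 2)) / 2)
      (y / (√(w ^ 2 - y ^ 2) * √(y ^ 2 - t ^ 2))) y := by
  have hP : 0 < w ^ 2 - y ^ 2 := by nlinarith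
  have hQ : 0 < y ^ 2 - t ^ 2 := by nlinarith
  have hD : 0 < w ^ 2 - t ^ 2 := by linarith
  set z := (2 * y ^ 2 - t ^ 2 - w ^ 2) / (w ^ 2 - t ^ 2) with hz
  have hz_gt : -1 < z := by rw [hz, lt_div_iff₀ hD]; linarith
  have hz_lt : z < 1 := by rw [hz, div_lt_one hD]; linarith
  have hsqrt : √(1 - z ^ 2) = 2 * (√(w ^ 2 - y ^ 2) * √(y ^ 2 - t ^ 2)) / (w ^ 2 - t ^ 2) := by
    rw [← Real.sqrt_mul hP.le, Real.sqrt_eq_iff_mul_self_eq_of_pos (by positivity), ← sq, div_pow,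
      mul_pow, Real.sq_sqrt (by positivity), hz]
    field_simp
    ring
  have hz' : HasDerivAt (fun y ↦ (2 * y ^ 2 - t ^ 2 - w ^ 2) / (w ^ 2 - t ^ 2))
      (2 * (2 * y) / (w ^ 2 - t ^ 2)) y := by
    simpa using ((((hasDerivAt_pow 2 y).const_mul 2).sub_const (t ^ 2)).sub_const
      (w ^ 2)).div_const (w ^ 2 - t ^ 2)
  convert! ((hasDerivAt_arcsin hz_gt.ne' hz_lt.ne).comp y hz').div_const 2 using 1
  rw [hsqrt]
  field_simp

lemma lintegral_Ioo_div_sqrt_mul_sqrt {t w : ℝ} (ht : 0 ≤ t) (htw : t < w) :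
    ∫⁻ y in Ioo t w, ENNReal.ofReal (y / (√(w ^ 2 - y ^ 2) * √(y ^ 2 - t ^ 2))) =
      ENNReal.ofReal (π / 2) := by
  set A : ℝ → ℝ := fun y ↦ arcsin ((2 * y ^ 2 - t ^ 2 - w ^ 2) / (w ^ 2 - t ^ 2)) / 2 with hA
  have hD : w ^ 2 - t ^ 2 ≠ 0 := by nlinarith
  have hAcont : ContinuousOn A (Icc t w) := by fun_prop
  have hAderiv : ∀ y ∈ Ioo t w, HasDerivAt A _ y := fun y hy ↦
    hasDerivAt_arcsin_sq_div_two ht hy.1 hy.2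
  have hnonneg : ∀ y ∈ Ioo t w, 0 ≤ y / (√(w ^ 2 - y ^ 2) * √(y ^ 2 - t ^ 2)) := fun y hy ↦
    div_nonneg (ht.trans hy.1.le) (by positivity)
  have hint := intervalIntegral.integrableOn_deriv_of_nonneg hAcont hAderiv hnonneg
  have hAw : A w = π / 4 := by
    rw [hA]
    simp only [show 2 * w ^ 2 - t ^ 2 - w ^ 2 = w ^ 2 - t ^ 2 by ring, div_self hD, arcsin_one]
    ring
  have hAt : A t = -(π / 4) := by
    rw [hA]
    simp only [show 2 * t ^ 2 - t ^ 2 - w ^ 2 = -(w ^ 2 - t ^ 2) by ring, neg_div, div_self hD,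
      arcsin_neg_one]
    ring
  rw [← ofReal_integral_eq_lintegral_ofReal (hint.mono_set Ioo_subset_Ioc_self)
    (ae_restrict_of_forall_mem measurableSet_Ioo hnonneg), ← integral_Ioc_eq_integral_Ioo,
    ← intervalIntegral.integral_of_le htw.le,
    intervalIntegral.integral_eq_sub_of_hasDerivAt_of_le htw.le hAcont hAderiv
      ((intervalIntegrable_iff_integrableOn_Ioc_of_le htw.le).2 hint), hAw, hAt]
  congr 1
  ring

lemma besselK0_nonneg (x : ℝ) : 0 ≤ besselK0 x :=
  integral_nonneg fun _ ↦ (exp_pos _).le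

lemma measurable_besselK0 : Measurable besselK0 := by
  have h : Continuous fun p : ℝ × ℝ ↦ rexp (-p.1 * cosh p.2) := by fun_prop
  exact (h.stronglyMeasurable.integral_prod_right' (ν := volume.restrict (Ioi 0))).measurable

lemma integrableOn_exp_neg_mul_cosh {x : ℝ} (hx : 0 < x) :
    IntegrableOn (fun v ↦ rexp (-x * cosh v)) (Ioi 0) := by
  refine (exp_neg_integrableOn_Ioi 0 hx).mono' (by fun_prop) ?_
  refine ae_restrict_of_forall_mem measurableSet_Ioi fun v hv ↦ ?_
  have hv_le : v ≤ cosh v := (self_le_sinh_iff.2 (mem_Ioi.1 hv).le).trans (sinh_lt_cosh v).le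
  rw [norm_of_nonneg (exp_pos _).le, exp_le_exp]
  exact mul_le_mul_of_nonpos_left hv_le (neg_nonpos.2 hx.le)

lemma ofReal_besselK0_mul {c y : ℝ} (hc : 0 < c) (hy : 0 < y) :
    ENNReal.ofReal (besselK0 (y * c)) =
      ∫⁻ w in Ioi y, ENNReal.ofReal (rexp (-(w * c)) / √(w ^ 2 - y ^ 2)) := by
  have himage : (fun v ↦ y * cosh v) '' Ioi 0 = Ioi y := by
    have hcosh : cosh '' Ioi 0 = Ioi 1 := coshOpenPartialHomeomorph.image_source_eq_target
    rw [← image_image (y * ·), hcosh, image_mul_left_Ioi hy, mul_one]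
  have hderiv : ∀ v ∈ Ioi (0 : ℝ),
      HasDerivWithinAt (fun v ↦ y * cosh v) (y * sinh v) (Ioi 0) v := fun v _ ↦
    ((hasDerivAt_cosh v).const_mul y).hasDerivWithinAt
  have hinj : InjOn (fun v ↦ y * cosh v) (Ioi 0) :=
    (mul_right_injective₀ hy.ne').comp_injOn coshOpenPartialHomeomorph.injOn
  rw [besselK0, ofReal_integral_eq_lintegral_ofReal (integrableOn_exp_neg_mul_cosh (mul_pos hy hc))
    (ae_of_all _ fun _ ↦ (exp_pos _).le), ← himage,
    lintegral_image_eq_lintegral_abs_deriv_mul measurableSet_Ioi hderiv hinj]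
  refine setLIntegral_congr_fun measurableSet_Ioi fun v hv ↦ ?_
  have hsinh : 0 < y * sinh v := mul_pos hy (sinh_pos_iff.2 hv)
  have hsqrt : √((y * cosh v) ^ 2 - y ^ 2) = y * sinh v := by
    rw [show (y * cosh v) ^ 2 - y ^ 2 = (y * sinh v) ^ 2 by rw [mul_pow, cosh_sq]; ring,
      sqrt_sq hsinh.le]
  rw [hsqrt, abs_of_pos hsinh, ← ENNReal.ofReal_mul hsinh.le, mul_div_cancel₀ _ hsinh.ne']
  ring_nf

lemma lintegral_Ioi_exp_neg_mul {c : ℝ} (hc : 0 < c) (t : ℝ) :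
    ∫⁻ w in Ioi t, ENNReal.ofReal (rexp (-(w * c))) = ENNReal.ofReal (rexp (-(t * c)) / c) := by
  have hcomm (w : ℝ) : -(w * c) = -c * w := by ring
  simp only [hcomm]
  rw [← ofReal_integral_eq_lintegral_ofReal (exp_neg_integrableOn_Ioi t hc)
    (ae_of_all _ fun _ ↦ (exp_pos _).le), integral_exp_mul_Ioi (neg_lt_zero.2 hc), neg_div_neg_eq]

lemma lintegral_mul_besselK0_div_sqrt {c t : ℝ} (hc : 0 < c) (ht : 0 ≤ t) :
    ∫⁻ y in Ioi t, ENNReal.ofReal (y * besselK0 (y * c) / √(y ^ 2 - t ^ 2)) =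
      ENNReal.ofReal (π / 2 * (rexp (-(t * c)) / c)) := by
  let F (y w : ℝ) : ENNReal := ENNReal.ofReal (rexp (-(w * c))) *
    ENNReal.ofReal (y / (√(w ^ 2 - y ^ 2) * √(y ^ 2 - t ^ 2)))
  calc ∫⁻ y in Ioi t, ENNReal.ofReal (y * besselK0 (y * c) / √(y ^ 2 - t ^ 2))
      = ∫⁻ y in Ioi t, ∫⁻ w in Ioi y, F y w := by
        refine setLIntegral_congr_fun measurableSet_Ioi fun y hy ↦ ?_
        have hy0 : 0 < y := ht.trans_lt hy
        rw [mul_div_right_comm, ENNReal.ofReal_mul (by positivity), ofReal_besselK0_mul hc hy0,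
          ← lintegral_const_mul' _ _ ENNReal.ofReal_ne_top]
        refine lintegral_congr fun w ↦ ?_
        simp only [F, ← ENNReal.ofReal_mul (show 0 ≤ y / √(y ^ 2 - t ^ 2) by positivity),
          ← ENNReal.ofReal_mul (exp_pos _).le]
        ring_nf
    _ = ∫⁻ w in Ioi t, ∫⁻ y in Ioo t w, F y w :=
        lintegral_Ioi_lintegral_Ioi_swap (by fun_prop) t
    _ = ∫⁻ w in Ioi t, ENNReal.ofReal (rexp (-(w * c))) * ENNReal.ofReal (π / 2) := by
        refine setLIntegral_congr_fun measurableSet_Ioi fun w hw ↦ ?_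
        rw [lintegral_const_mul' _ _ ENNReal.ofReal_ne_top, lintegral_Ioo_div_sqrt_mul_sqrt ht hw]
    _ = ENNReal.ofReal (π / 2 * (rexp (-(t * c)) / c)) := by
        rw [lintegral_mul_const' _ _ ENNReal.ofReal_ne_top, lintegral_Ioi_exp_neg_mul hc, mul_comm,
          ← ENNReal.ofReal_mul (by positivity)]

/-- The kernel `(2 c / π) · y K₀(y c) / √(y² - t²)` in `y`, normalized so that its integral over
`(t, ∞)` is `e^{-t c}`. -/
noncomputable def abelKernel (t c y : ℝ) : ℝ :=
  2 * c / π * (y * besselK0 (y * c) / √(y ^ 2 - t ^ 2))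

lemma measurable_abelKernel (t : ℝ) : Measurable fun p : ℝ × ℝ ↦ abelKernel t p.1 p.2 := by
  have := measurable_besselK0
  unfold abelKernel
  fun_prop

lemma lintegral_abelKernel {c t : ℝ} (hc : 0 < c) (ht : 0 ≤ t) :
    ∫⁻ y in Ioi t, ENNReal.ofReal (abelKernel t c y) = ENNReal.ofReal (rexp (-(t * c))) := by
  have hconst : 0 ≤ 2 * c / π := by positivity
  simp only [abelKernel, ENNReal.ofReal_mul hconst]
  rw [lintegral_const_mul' _ _ ENNReal.ofReal_ne_top, lintegral_mul_besselK0_div_sqrt hc ht,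
    ← ENNReal.ofReal_mul hconst]
  congr 1
  field_simp

lemma ae_abelKernel_nonneg {c t : ℝ} (hc : 0 ≤ c) (ht : 0 ≤ t) :
    0 ≤ᵐ[volume.restrict (Ioi t)] abelKernel t c := by
  refine ae_restrict_of_forall_mem measurableSet_Ioi fun y hy ↦ ?_
  have hy0 : 0 < y := ht.trans_lt hy
  have hK := besselK0_nonneg (y * c)
  simp only [abelKernel, Pi.zero_apply]
  positivity

lemma integrableOn_abelKernel {c t : ℝ} (hc : 0 < c) (ht : 0 ≤ t) :
    IntegrableOn (abelKernel t c) (Ioi t) := by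
  refine ⟨(measurable_abelKernel t).of_uncurry_left.aestronglyMeasurable, ?_⟩
  rw [hasFiniteIntegral_iff_ofReal (ae_abelKernel_nonneg hc.le ht), lintegral_abelKernel hc ht]
  exact ENNReal.ofReal_lt_top

lemma integral_abelKernel {c t : ℝ} (hc : 0 < c) (ht : 0 ≤ t) :
    ∫ y in Ioi t, abelKernel t c y = rexp (-(t * c)) := by
  rw [integral_eq_lintegral_of_nonneg_ae (ae_abelKernel_nonneg hc.le ht)
    (integrableOn_abelKernel hc ht).aestronglyMeasurable, lintegral_abelKernel hc ht,
    ENNReal.toReal_ofReal (exp_pos _).le]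

section Superposition

variable {X : Type*} [MeasurableSpace X] {μ : Measure X} [SFinite μ] {c : X → ℝ} {t : ℝ}

lemma integrable_abelKernel_smul {E : Type*} [NormedAddCommGroup E] [NormedSpace ℝ E]
    (hc : AEMeasurable c μ) (hc_pos : ∀ᵐ x ∂μ, 0 < c x) (ht : 0 ≤ t) {φ : X → E}
    (hφ : Integrable (fun x ↦ rexp (-(t * c x)) • φ x) μ) :
    Integrable (Function.uncurry fun y x ↦ abelKernel t (c x) y • φ x)
      ((volume.restrict (Ioi t)).prod μ) := by
  have hφ_meas : AEStronglyMeasurable φ μ := by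
    have hexp : AEMeasurable (fun x ↦ rexp (t * c x)) μ := by fun_prop
    refine (hexp.aestronglyMeasurable.smul hφ.aestronglyMeasurable).congr (ae_of_all _ fun x ↦ ?_)
    simp only [Pi.smul_apply', smul_smul, ← exp_add, add_neg_cancel, exp_zero, one_smul]
  have hker_meas : AEMeasurable (fun p : ℝ × X ↦ abelKernel t (c p.2) p.1)
      ((volume.restrict (Ioi t)).prod μ) :=
    (measurable_abelKernel t).comp_aemeasurable (hc.comp_snd.prodMk measurable_fst.aemeasurable)
  refine (integrable_prod_iff' (hker_meas.aestronglyMeasurable.smul hφ_meas.comp_snd)).2 ⟨?_, ?_⟩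
  · filter_upwards [hc_pos] with x hx using (integrableOn_abelKernel hx ht).smul_const (φ x)
  · refine hφ.norm.congr ?_
    filter_upwards [hc_pos] with x hx
    rw [norm_smul, norm_of_nonneg (exp_pos _).le, ← integral_abelKernel hx ht, ← integral_mul_const]
    refine integral_congr_ae ?_
    filter_upwards [ae_abelKernel_nonneg hx.le ht] with y hy
    rw [Pi.smul_apply', norm_smul, norm_of_nonneg hy]

lemma integral_Ioi_integral_abelKernel_smul {E : Type*} [NormedAddCommGroup E] [NormedSpace ℝ E]
    [CompleteSpace E] (hc : AEMeasurable c μ) (hc_pos : ∀ᵐ x ∂μ, 0 < c x) (ht : 0 ≤ t) {φ : X → E}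
    (hφ : Integrable (fun x ↦ rexp (-(t * c x)) • φ x) μ) :
    ∫ y in Ioi t, ∫ x, abelKernel t (c x) y • φ x ∂μ = ∫ x, rexp (-(t * c x)) • φ x ∂μ := by
  rw [integral_integral_swap (integrable_abelKernel_smul hc hc_pos ht hφ)]
  refine integral_congr_ae ?_
  filter_upwards [hc_pos] with x hx
  rw [integral_smul_const, integral_abelKernel hx ht]

theorem integral_f_sqrt_Ioi_general (hc : AEMeasurable c μ) (hc_pos : ∀ᵐ x ∂μ, 0 < c x)
    (φ : X → ℂ) (f : ℝ → ℂ)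
    (hf : ∀ y : ℝ, 0 < y → f y = ((2 * y / π : ℝ) : ℂ) *
      ∫ x, ((besselK0 (y * c x) : ℝ) : ℂ) * φ x * (c x : ℂ) ∂μ)
    (ht : 0 ≤ t) (hφ : Integrable (fun x ↦ ((rexp (-(t * c x)) : ℝ) : ℂ) * φ x) μ) :
    ∫ y in Ioi t, f y / ((√(y ^ 2 - t ^ 2) : ℝ) : ℂ) =
      ∫ x, ((rexp (-(t * c x)) : ℝ) : ℂ) * φ x ∂μ := by
  simp only [← Complex.real_smul] at hφ ⊢
  rw [← integral_Ioi_integral_abelKernel_smul hc hc_pos ht hφ]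
  refine setIntegral_congr_fun measurableSet_Ioi fun y hy ↦ ?_
  simp only [hf y (ht.trans_lt hy), ← integral_const_mul, ← integral_div, abelKernel,
    Complex.real_smul]
  refine integral_congr_ae (ae_of_all _ fun x ↦ ?_)
  push_cast
  ring

end Superposition

/-- `∫_t^∞ f(y)/(y² − t²)^{1/2} dy = ∫_{−π}^{π} e^{−t cosh u} φ(u) du` for the
function `f` of Theorem 1. -/
theorem integral_f_sqrt_Ioi
    (C : ℝ) (hC : 0 < C) (ψ : ℝ → ℂ)
    (hper : ∀ u : ℝ, ψ (u + 2 * π) = ψ u)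
    (hlip : ∀ u ∈ Set.Icc (-π) π, ∀ v ∈ Set.Icc (-π) π, ‖ψ u - ψ v‖ ≤ C * |u - v|)
    (φ : ℝ → ℂ) (hφ : ∀ u : ℝ, φ u = ψ u * Real.sinh u)
    (f : ℝ → ℂ)
    (hf : ∀ x : ℝ, 0 < x → f x = ((2 * x / π : ℝ) : ℂ) *
      ∫ u in (-π)..π, ((besselK0 (x * Real.cosh u) : ℝ) : ℂ) * φ u * (Real.cosh u : ℂ)) :
    ∀ t : ℝ, 0 < t →
      ∫ y in Set.Ioi t, f y / ((Real.sqrt (y ^ 2 - t ^ 2) : ℝ) : ℂ) =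
        ∫ u in (-π)..π, ((Real.exp (-(t * Real.cosh u)) : ℝ) : ℂ) * φ u := by
  have hψ_cont : ContinuousOn ψ (Icc (-π) π) :=
    (LipschitzOnWith.of_dist_le' (by simpa only [dist_eq_norm, norm_eq_abs] using hlip))
      |>.continuousOn
  have hφ_cont : ContinuousOn φ (Icc (-π) π) :=
    (hψ_cont.mul (by fun_prop)).congr fun u _ ↦ hφ u
  simp only [intervalIntegral.integral_of_le (neg_le_self pi_pos.le)] at hf ⊢
  exact fun t ht ↦ integral_f_sqrt_Ioi_general continuous_cosh.aemeasurable
    (ae_of_all _ cosh_pos) φ f hf ht.le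
    ((ContinuousOn.mul (by fun_prop) hφ_cont).integrableOn_Icc.mono_set Ioc_subset_Icc_self)
end
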